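/- arXiv:1512.04307 — 2 statements merged into one kernel-verified Lean document; each statement's English description precedes it below -/
import Mathlib

section
/- Let λ_c(β) = sup_{c ∈ (e^{-2/β}, 1)} 4βc²(-ln c)(1 + (1/2)β ln c) for β > 0. Then λ_c(β) < 2 for every β > 0, and λ_c(β) → 2 as β → ∞. -/
/-!
Put `s = -β log c`, which runs over `(0, 2)`. The objective becomes `2 s (2 - s) exp (-2 s / β)`.

*Upper bound.* If `s ≤ 1/2`, then `s (2 - s) ≤ 3/4` and the value is at most `3/2`. If `s ≥ 1/2`,
then `s (2 - s) ≤ 1` and `exp (-2 s / β) ≤ 1 / (1 + 2 s / β) ≤ β / (β + 1)`, so the value is at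
most `2 β / (β + 1)`. The bound `max (3/2) (2 β / (β + 1)) < 2` is uniform in `c`, hence strict
inequality survives the supremum (`objective_le`).

*Lower bound.* The choice `s = 1`, i.e. `c = exp (-1 / β)`, gives the value `2 exp (-2 / β)`, which
tends to `2` as `β → ∞` (`two_exp_mem`).
-/

open Real Set Filter

/-- The critical heating parameter λ_c(β) for the voltage-controlled radial problem. -/
noncomputable def lambdaCrit (β : ℝ) : ℝ :=
  sSup ((fun c : ℝ => 4 * β * c ^ 2 * (-Real.log c) * (1 + β * Real.log c / 2)) ''
    Set.Ioo (Real.exp (-2 / β)) 1)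

lemma objective_le {β c : ℝ} (hβ : 0 < β) (hc : c ∈ Set.Ioo (Real.exp (-2 / β)) 1) :
    4 * β * c ^ 2 * (-Real.log c) * (1 + β * Real.log c / 2) ≤ max (3 / 2) (2 * β / (β + 1)) := by
  have hc0 : 0 < c := (Real.exp_pos _).trans hc.1
  have hlog : Real.log c < 0 := Real.log_neg hc0 hc.2
  obtain ⟨s, hs⟩ : ∃ s, s = -(β * Real.log c) := ⟨_, rfl⟩
  have hs0 : 0 < s := by rw [hs]; nlinarith
  -- `exp (-y) * (1 + y) ≤ 1` at `y = -2 log c`, multiplied by `β`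
  have hkey : c ^ 2 * (β + 2 * s) ≤ β := by
    have h1 : c ^ 2 * Real.exp (-2 * Real.log c) = 1 := by
      have h : c ^ 2 = Real.exp (2 * Real.log c) := by
        rw [two_mul, Real.exp_add, Real.exp_log hc0, sq]
      rw [h, ← Real.exp_add]
      simp
    have h2 : -2 * Real.log c + 1 ≤ Real.exp (-2 * Real.log c) := Real.add_one_le_exp _
    have h3 : c ^ 2 * (-2 * Real.log c + 1) ≤ 1 :=
      (mul_le_mul_of_nonneg_left h2 (sq_nonneg c)).trans_eq h1
    calc c ^ 2 * (β + 2 * s) = β * (c ^ 2 * (-2 * Real.log c + 1)) := by rw [hs]; ring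
      _ ≤ β * 1 := mul_le_mul_of_nonneg_left h3 hβ.le
      _ = β := mul_one β
  have hval : 4 * β * c ^ 2 * (-Real.log c) * (1 + β * Real.log c / 2)
      = 2 * (c ^ 2 * (s * (2 - s))) := by rw [hs]; ring
  have hcsq : c ^ 2 ≤ 1 := pow_le_one₀ hc0.le hc.2.le
  rw [hval]
  rcases le_total s (1 / 2) with h | h
  · refine le_max_of_le_left ?_
    have h1 : s * (2 - s) ≤ 3 / 4 := by nlinarith
    nlinarith [mul_le_mul_of_nonneg_left h1 (sq_nonneg c)]
  · refine le_max_of_le_right ?_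
    have h1 : s * (2 - s) ≤ 1 := by nlinarith [sq_nonneg (s - 1)]
    have h2 : c ^ 2 * (s * (2 - s)) ≤ c ^ 2 := mul_le_of_le_one_right (sq_nonneg c) h1
    have h3 : c ^ 2 * (β + 1) ≤ β := by nlinarith [sq_nonneg c]
    rw [le_div_iff₀ (by linarith)]
    nlinarith

lemma two_exp_mem {β : ℝ} (hβ : 0 < β) :
    2 * Real.exp (-2 / β) ∈
      (fun c : ℝ => 4 * β * c ^ 2 * (-Real.log c) * (1 + β * Real.log c / 2)) ''
        Set.Ioo (Real.exp (-2 / β)) 1 := by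
  refine ⟨Real.exp (-1 / β), ⟨?_, ?_⟩, ?_⟩
  · exact Real.exp_lt_exp.2 (div_lt_div_of_pos_right (by norm_num) hβ)
  · rw [Real.exp_lt_one_iff]
    exact div_neg_of_neg_of_pos (by norm_num) hβ
  · have h : Real.exp (-1 / β) ^ 2 = Real.exp (-2 / β) := by
      rw [sq, ← Real.exp_add]; congr 1; ring
    simp only [h, Real.log_exp]
    field_simp
    ring

lemma lambdaCrit_lt_two {β : ℝ} (hβ : 0 < β) : lambdaCrit β < 2 := by
  have hle : lambdaCrit β ≤ max (3 / 2) (2 * β / (β + 1)) := by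
    refine csSup_le ⟨_, two_exp_mem hβ⟩ ?_
    rintro _ ⟨c, hc, rfl⟩
    exact objective_le hβ hc
  refine hle.trans_lt (max_lt (by norm_num) ?_)
  rw [div_lt_iff₀ (by linarith)]
  linarith

lemma two_exp_le_lambdaCrit {β : ℝ} (hβ : 0 < β) : 2 * Real.exp (-2 / β) ≤ lambdaCrit β := by
  refine le_csSup ⟨max (3 / 2) (2 * β / (β + 1)), ?_⟩ (two_exp_mem hβ)
  rintro _ ⟨c, hc, rfl⟩
  exact objective_le hβ hc

/-- λ_c(β) < 2 for every β > 0, and λ_c(β) → 2 as β → ∞. -/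
theorem lambdaCrit_large_beta :
    (∀ β : ℝ, 0 < β → lambdaCrit β < 2) ∧
    Filter.Tendsto lambdaCrit Filter.atTop (nhds 2) := by
  refine ⟨fun β hβ => lambdaCrit_lt_two hβ, ?_⟩
  have hlim : Filter.Tendsto (fun β : ℝ => 2 * Real.exp (-2 / β)) Filter.atTop (nhds 2) := by
    have h0 : Filter.Tendsto (fun β : ℝ => -2 / β) Filter.atTop (nhds 0) :=
      Filter.tendsto_id.const_div_atTop (-2)
    have h1 := ((Real.continuous_exp.tendsto 0).comp h0).const_mul 2
    simpa using h1
  refine tendsto_of_tendsto_of_tendsto_of_le_of_le' hlim tendsto_const_nhds ?_ ?_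
  · filter_upwards [Filter.eventually_gt_atTop 0] with β hβ using two_exp_le_lambdaCrit hβ
  · filter_upwards [Filter.eventually_gt_atTop 0] with β hβ using (lambdaCrit_lt_two hβ).le
end

section
/- Let α > 0, a ∈ (0, π), b = (2a/α) tan(a/2), and M = 2a² e^{b} / cos²(a/2). Then the function θ(z) = 2 ln(cos(a z)/cos(a/2)) + b satisfies θ''(z) + M e^{-θ(z)} = 0 for all z ∈ (-1/2, 1/2), together with the Robin boundary conditions θ'(1/2) = -α θ(1/2) and θ'(-1/2) = α θ(-1/2). -/
open Real Set

/-!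
Wherever `cos (a z) > 0`, which includes the closed interval `[-1/2, 1/2]` because `a < π`,
the profile satisfies `θ' = -2 a tan (a z)`, hence `θ'' = -2 a² / cos² (a z)`. There
`exp (-θ) = (cos (a / 2) / cos (a z))² exp (-b)`, and `M` is the constant that makes
`M exp (-θ) = 2 a² / cos² (a z)`. At `z = ±1/2` the logarithm vanishes, so `θ = b` and the Robin
conditions reduce to `2 a tan (a / 2) = α b`.
-/

lemma hasDerivAt_axial {a b c z : ℝ} (hc : c ≠ 0) (hz : cos (a * z) ≠ 0) :
    HasDerivAt (fun z => 2 * log (cos (a * z) / c) + b) (-2 * a * tan (a * z)) z := by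
  have h1 : HasDerivAt (fun z => a * z) a z := by
    simpa using (hasDerivAt_id z).const_mul a
  have h2 := (((h1.cos.div_const c).log (div_ne_zero hz hc)).const_mul 2).add_const b
  refine h2.congr_deriv ?_
  rw [tan_eq_sin_div_cos]
  field_simp

lemma hasDerivAt_tan_mul {a z : ℝ} (hz : cos (a * z) ≠ 0) :
    HasDerivAt (fun z => -2 * a * tan (a * z)) (-2 * a ^ 2 / cos (a * z) ^ 2) z := by
  have h1 : HasDerivAt (fun z => a * z) a z := by
    simpa using (hasDerivAt_id z).const_mul a
  have h2 := ((hasDerivAt_tan hz).comp z h1).const_mul (-2 * a)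
  refine h2.congr_deriv ?_
  field_simp

/-- For α > 0, a ∈ (0, π), b = (2a/α) tan(a/2), and
M = 2a² e^b / cos²(a/2), the function θ(z) = 2 ln(cos(az)/cos(a/2)) + b satisfies
θ'' + M e^{-θ} = 0 on (-1/2, 1/2), with Robin conditions θ'(1/2) = -α θ(1/2) and
θ'(-1/2) = α θ(-1/2). -/
theorem axial_steady_state_current (α a b M : ℝ) (hα : 0 < α)
    (ha : a ∈ Set.Ioo 0 Real.pi)
    (hb : b = (2 * a / α) * Real.tan (a / 2))
    (hM : M = 2 * a ^ 2 * Real.exp b / Real.cos (a / 2) ^ 2)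
    (θ : ℝ → ℝ)
    (hθ : ∀ z : ℝ, θ z = 2 * Real.log (Real.cos (a * z) / Real.cos (a / 2)) + b) :
    (∀ z ∈ Set.Ioo (-(1:ℝ)/2) (1/2),
      deriv (deriv θ) z + M * Real.exp (-θ z) = 0) ∧
    deriv θ (1/2) = -α * θ (1/2) ∧
    deriv θ (-(1:ℝ)/2) = α * θ (-(1:ℝ)/2) := by
  obtain rfl : θ = fun z => 2 * log (cos (a * z) / cos (a / 2)) + b := funext hθ
  obtain ⟨ha0, haπ⟩ := ha
  have hc : 0 < cos (a / 2) := cos_pos_of_mem_Ioo ⟨by linarith, by linarith⟩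
  have hhalf : a * (1 / 2) = a / 2 := by ring
  have hneg : a * (-(1 : ℝ) / 2) = -(a / 2) := by ring
  have hαb : α * b = 2 * a * tan (a / 2) := by
    rw [hb]
    field_simp
  refine ⟨fun z hz => ?_, ?_, ?_⟩
  · have hpos : ∀ y ∈ Ioo (-(1 : ℝ) / 2) (1 / 2), 0 < cos (a * y) := fun y hy =>
      cos_pos_of_mem_Ioo ⟨by nlinarith [hy.1], by nlinarith [hy.2]⟩
    have hz0 := hpos z hz
    have hderiv : deriv (fun z => 2 * log (cos (a * z) / cos (a / 2)) + b)
        =ᶠ[nhds z] fun z => -2 * a * tan (a * z) := by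
      filter_upwards [Ioo_mem_nhds hz.1 hz.2] with y hy
      exact (hasDerivAt_axial hc.ne' (hpos y hy).ne').deriv
    have hexp : exp (-(2 * log (cos (a * z) / cos (a / 2)) + b))
        = (cos (a / 2) / cos (a * z)) ^ 2 / exp b := by
      rw [neg_add, exp_add, exp_neg, exp_neg, two_mul, exp_add, exp_log (div_pos hz0 hc)]
      field_simp
    rw [hderiv.deriv_eq, (hasDerivAt_tan_mul hz0.ne').deriv, hM]
    simp only [hexp]
    have := exp_pos b
    field_simp
    ring
  · rw [(hasDerivAt_axial hc.ne' (by rw [hhalf]; exact hc.ne')).deriv]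
    simp only [hhalf, div_self hc.ne', log_one]
    linarith
  · rw [(hasDerivAt_axial hc.ne' (by rw [hneg, cos_neg]; exact hc.ne')).deriv]
    simp only [hneg, cos_neg, tan_neg, div_self hc.ne', log_one]
    linarith
end
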